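/- Define T(k,0) := 1 for every k ∈ ℕ₀, and for n ∈ ℕ and k ∈ ℕ₀ define T(k,n) := q^n · [ 1/((q;q)_n)² + Σ_{j=1}^{n} (−1)^j q^{j(j−1)/2}(1 + q^j) / ((q;q)_{n−j}(q;q)_{n+j}) · ((q^j + q^{−j})/2)^k ]. Then there exists K > 0 such that for every pair of positive integers k and n, (−1)^n T(k,n) ≤ K · q^{n(n+1)/2} / q^{nk}; in fact K = 2(−q;q)_∞/(q;q)_∞ works, where (a;q)_∞ := ∏_{k=0}^{∞}(1 − a q^k). -/

import Mathlib

/-!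
Write `x_j = (q^j + q^{-j})/2`. Up to a factor depending only on `n`, `T(k,n)` is the divided
difference of `x ↦ x^k` at the nodes `x_0, …, x_n`. This shows up as the three-term recurrence
`T(k+1,n+1) = x_{n+1} T(k,n+1) - (q^{-n}/2) T(k,n)` (`Tkn_rec`), which holds because the two
sides agree coefficientwise in the `x_j^k`. The initial values are `T(k,0) = 1` and `T(0,n) = 0`
for `n ≥ 1` (`Tkn_zero_succ`); the latter is a telescoping sum. Hence `T(k,n) = 0` for `k < n`,
and `(-1)^n T(k,n) ≥ 0`.

Normalising `U(k,n) = (-1)^n T(k,n) q^{nk} / q^{n(n+1)/2}`, the recurrence becomes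
`U(k+1,n+1) = y U(k,n+1) + (q^{k-n}/2) U(k,n)` with `y = (1 + q^{2(n+1)})/2 ≤ 1`
(`Ukn_rec`). Comparison with `1/(q;q)_m = 1/(q;q)_{m-1} + q^m/(q;q)_m` gives
`U(n+m,n) ≤ 1/(q;q)_m` by induction (`Ukn_bound`).
Finally `1/(q;q)_m ≤ 1/(q;q)_∞ ≤ 2(-q;q)_∞/(q;q)_∞`.
-/

open Filter

noncomputable section

/-- The q-Pochhammer symbol `(a;q)_n = ∏_{k=0}^{n-1} (1 - a q^k)` for real `a`, `q`. -/
def qPoch (q a : ℝ) (n : ℕ) : ℝ := ∏ k ∈ Finset.range n, (1 - a * q ^ k)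

/-- The infinite q-Pochhammer symbol `(a;q)_∞ = ∏_{k=0}^∞ (1 - a q^k)`. -/
def qPochInf (q a : ℝ) : ℝ := ∏' k : ℕ, (1 - a * q ^ k)

/-- The numbers `T(k,n)`: `T(k,0) = 1` and for `n ≥ 1`,
`T(k,n) = q^n [ 1/((q;q)_n)² + Σ_{j=1}^n (−1)^j q^{j(j−1)/2}(1+q^j)/((q;q)_{n−j}(q;q)_{n+j}) ((q^j+q^{−j})/2)^k ]`. -/
def Tkn (q : ℝ) (k n : ℕ) : ℝ :=
  if n = 0 then 1
  else
    q ^ n * (1 / qPoch q q n ^ 2 +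
      ∑ j ∈ Finset.Icc 1 n, (-1 : ℝ) ^ j * q ^ (j * (j - 1) / 2) * (1 + q ^ j) /
        (qPoch q q (n - j) * qPoch q q (n + j)) * ((q ^ j + q⁻¹ ^ j) / 2) ^ k)

lemma qPoch_succ (q : ℝ) (n : ℕ) : qPoch q q (n + 1) = qPoch q q n * (1 - q ^ (n + 1)) := by
  rw [qPoch, Finset.prod_range_succ, ← qPoch, pow_succ']

lemma one_sub_pow_pos {q : ℝ} (hq0 : 0 < q) (hq1 : q < 1) (n : ℕ) : 0 < 1 - q ^ (n + 1) :=
  sub_pos.2 (pow_lt_one₀ hq0.le hq1 n.succ_ne_zero)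

lemma qPoch_pos {q : ℝ} (hq0 : 0 < q) (hq1 : q < 1) (n : ℕ) : 0 < qPoch q q n := by
  induction n with
  | zero => simp [qPoch]
  | succ n ih => rw [qPoch_succ]; exact mul_pos ih (one_sub_pow_pos hq0 hq1 n)

/-- The bracketed formula for `T(k,n)` also gives the right value at `n = 0`. -/
lemma Tkn_eq (q : ℝ) (k n : ℕ) : Tkn q k n = q ^ n * (1 / qPoch q q n ^ 2 +
      ∑ j ∈ Finset.Icc 1 n, (-1 : ℝ) ^ j * q ^ (j * (j - 1) / 2) * (1 + q ^ j) /
        (qPoch q q (n - j) * qPoch q q (n + j)) * ((q ^ j + q⁻¹ ^ j) / 2) ^ k) := by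
  rcases n with _ | n
  · simp [Tkn, qPoch]
  · simp [Tkn]

lemma Tkn_n_zero (q : ℝ) (k : ℕ) : Tkn q k 0 = 1 := by simp [Tkn]

/-- Coefficientwise, the recurrence is the factorisation
`x_j - x_N = -q^{-N} (1 - q^{N-j}) (1 - q^{N+j}) / 2`, here with `N = j + d + 1`. -/
lemma node_sub {q : ℝ} (hq0 : 0 < q) (j d : ℕ) :
    (q ^ j + q⁻¹ ^ j) / 2 - (q ^ (j + d + 1) + q⁻¹ ^ (j + d + 1)) / 2 =
      -(q⁻¹ ^ (j + d + 1) / 2) * ((1 - q ^ (d + 1)) * (1 - q ^ (j + d + 1 + j))) := by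
  simp only [inv_pow]
  field_simp
  ring

lemma Tkn_rec {q : ℝ} (hq0 : 0 < q) (hq1 : q < 1) (k n : ℕ) :
    Tkn q (k + 1) (n + 1) = (q ^ (n + 1) + q⁻¹ ^ (n + 1)) / 2 * Tkn q k (n + 1)
      - q⁻¹ ^ n / 2 * Tkn q k n := by
  have hterm : ∀ j ∈ Finset.Icc 1 n,
      (-1 : ℝ) ^ j * q ^ (j * (j - 1) / 2) * (1 + q ^ j) /
        (qPoch q q (n + 1 - j) * qPoch q q (n + 1 + j)) * ((q ^ j + q⁻¹ ^ j) / 2) ^ (k + 1) =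
      (q ^ (n + 1) + q⁻¹ ^ (n + 1)) / 2 * ((-1 : ℝ) ^ j * q ^ (j * (j - 1) / 2) * (1 + q ^ j) /
        (qPoch q q (n + 1 - j) * qPoch q q (n + 1 + j)) * ((q ^ j + q⁻¹ ^ j) / 2) ^ k) -
      q⁻¹ ^ (n + 1) / 2 * ((-1 : ℝ) ^ j * q ^ (j * (j - 1) / 2) * (1 + q ^ j) /
        (qPoch q q (n - j) * qPoch q q (n + j)) * ((q ^ j + q⁻¹ ^ j) / 2) ^ k) := by
    intro j hj
    obtain ⟨d, rfl⟩ := Nat.exists_eq_add_of_le (Finset.mem_Icc.1 hj).2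
    have e1 : j + d + 1 - j = d + 1 := by omega
    have e2 : j + d + 1 + j = j + d + j + 1 := by omega
    have e3 : j + d - j = d := by omega
    have hx := node_sub hq0 j d
    rw [e2] at hx
    rw [e1, e2, e3, qPoch_succ, qPoch_succ, pow_succ _ k]
    have h1 := (qPoch_pos hq0 hq1 d).ne'
    have h2 := (qPoch_pos hq0 hq1 (j + d + j)).ne'
    have h3 := (one_sub_pow_pos hq0 hq1 d).ne'
    have h4 := (one_sub_pow_pos hq0 hq1 (j + d + j)).ne'
    rw [sub_eq_iff_eq_add] at hx
    generalize (q ^ j + q⁻¹ ^ j) / 2 = x at *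
    generalize (q ^ (j + d + 1) + q⁻¹ ^ (j + d + 1)) / 2 = y at *
    generalize q⁻¹ ^ (j + d + 1) = z at *
    generalize 1 - q ^ (d + 1) = u at *
    generalize 1 - q ^ (j + d + j + 1) = v at *
    rw [show x ^ k * x = x ^ k * (-(z / 2) * (u * v) + y) by rw [← hx]]
    field_simp
    ring
  have h0 : 1 / qPoch q q (n + 1) ^ 2 =
      (q ^ (n + 1) + q⁻¹ ^ (n + 1)) / 2 * (1 / qPoch q q (n + 1) ^ 2) -
        q⁻¹ ^ (n + 1) / 2 * (1 / qPoch q q n ^ 2) := by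
    have hx := node_sub hq0 0 n
    simp only [pow_zero, zero_add, add_zero] at hx
    rw [qPoch_succ]
    have h1 := (qPoch_pos hq0 hq1 n).ne'
    have h3 := (one_sub_pow_pos hq0 hq1 n).ne'
    generalize (q ^ (n + 1) + q⁻¹ ^ (n + 1)) / 2 = y at *
    generalize q⁻¹ ^ (n + 1) = z at *
    generalize 1 - q ^ (n + 1) = u at *
    field_simp
    linear_combination 2 * hx
  rw [Tkn_eq, Tkn_eq q k (n + 1), Tkn_eq q k n, Finset.sum_Icc_succ_top (by omega),
    Finset.sum_Icc_succ_top (by omega), Finset.sum_congr rfl hterm, Finset.sum_sub_distrib,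
    ← Finset.mul_sum, ← Finset.mul_sum, pow_succ _ k]
  have hz : q ^ (n + 1) * q⁻¹ ^ (n + 1) = q ^ n * q⁻¹ ^ n := by
    rw [← mul_pow, ← mul_pow, mul_inv_cancel₀ hq0.ne', one_pow, one_pow]
  generalize (∑ j ∈ Finset.Icc 1 n, (-1 : ℝ) ^ j * q ^ (j * (j - 1) / 2) * (1 + q ^ j) /
        (qPoch q q (n - j) * qPoch q q (n + j)) * ((q ^ j + q⁻¹ ^ j) / 2) ^ k) = s
  linear_combination (-(1 / qPoch q q n ^ 2 + s) / 2) * hz + q ^ (n + 1) * h0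

lemma tri_succ (m : ℕ) : (m + 1) * (m + 1 - 1) / 2 + (m + 1) = (m + 1) * (m + 1 + 1) / 2 := by
  have : (m + 1) * (m + 1 + 1) = (m + 1) * m + (m + 1) * 2 := by ring
  rw [this, Nat.add_mul_div_right _ _ (by norm_num), Nat.add_sub_cancel]

/-- Closed form for the truncations of the sum defining `T(0,n)`, `n = m + d + 1`. -/
lemma partial_sum {q : ℝ} (hq0 : 0 < q) (hq1 : q < 1) (m d : ℕ) :
    1 / qPoch q q (m + d + 1) ^ 2 +
      ∑ j ∈ Finset.Icc 1 m, (-1 : ℝ) ^ j * q ^ (j * (j - 1) / 2) * (1 + q ^ j) /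
        (qPoch q q (m + d + 1 - j) * qPoch q q (m + d + 1 + j)) =
    (-1 : ℝ) ^ m * q ^ (m * (m + 1) / 2) /
      (qPoch q q d * qPoch q q (m + d + 1 + m) * (1 - q ^ (m + d + 1))) := by
  induction m generalizing d with
  | zero =>
    have h1 := (qPoch_pos hq0 hq1 d).ne'
    have h3 := (one_sub_pow_pos hq0 hq1 d).ne'
    simp [qPoch_succ]
    field_simp
  | succ m ih =>
    have := ih (d + 1)
    rw [show m + (d + 1) + 1 = m + 1 + d + 1 by ring] at this
    rw [Finset.sum_Icc_succ_top (by omega), ← add_assoc, this,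
      show m + 1 + d + 1 - (m + 1) = d + 1 by omega,
      show m + 1 + d + 1 + (m + 1) = m + 1 + d + 1 + m + 1 by ring, qPoch_succ, qPoch_succ,
      ← tri_succ]
    have ht : m * (m + 1) / 2 = (m + 1) * (m + 1 - 1) / 2 := by
      rw [Nat.add_sub_cancel, mul_comm]
    rw [ht]
    have h1 := (qPoch_pos hq0 hq1 d).ne'
    have h2 := (qPoch_pos hq0 hq1 (m + 1 + d + 1 + m)).ne'
    have h3 := (one_sub_pow_pos hq0 hq1 d).ne'
    have h4 := (one_sub_pow_pos hq0 hq1 (m + 1 + d)).ne'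
    have h5 := (one_sub_pow_pos hq0 hq1 (m + 1 + d + 1 + m)).ne'
    generalize qPoch q q d = a at *
    generalize qPoch q q (m + 1 + d + 1 + m) = b at *
    rw [pow_add q _ (m + 1)]
    generalize q ^ ((m + 1) * (m + 1 - 1) / 2) = t at *
    field_simp
    ring

lemma Tkn_zero_succ {q : ℝ} (hq0 : 0 < q) (hq1 : q < 1) (n : ℕ) : Tkn q 0 (n + 1) = 0 := by
  have h := partial_sum hq0 hq1 n 0
  simp only [add_zero] at h
  rw [Tkn_eq, Finset.sum_Icc_succ_top (by omega)]
  simp only [pow_zero, mul_one]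
  rw [← add_assoc, h, Nat.sub_self, ← add_assoc, qPoch_succ q (n + 1 + n)]
  have ht : n * (n + 1) / 2 = (n + 1) * (n + 1 - 1) / 2 := by
    rw [Nat.add_sub_cancel, mul_comm]
  rw [ht]
  have h1 := (qPoch_pos hq0 hq1 0).ne'
  have h2 := (qPoch_pos hq0 hq1 (n + 1 + n)).ne'
  have h4 := (one_sub_pow_pos hq0 hq1 n).ne'
  have h5 := (one_sub_pow_pos hq0 hq1 (n + 1 + n)).ne'
  field_simp
  ring

/-- Divided differences of order `n` kill polynomials of degree `k < n`. -/
lemma Tkn_eq_zero {q : ℝ} (hq0 : 0 < q) (hq1 : q < 1) {k n : ℕ} (h : k < n) : Tkn q k n = 0 := by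
  induction k generalizing n with
  | zero =>
    obtain ⟨n, rfl⟩ := Nat.exists_eq_succ_of_ne_zero h.ne'
    exact Tkn_zero_succ hq0 hq1 n
  | succ k ih =>
    obtain ⟨n, rfl⟩ := Nat.exists_eq_succ_of_ne_zero (Nat.ne_of_gt (Nat.zero_lt_of_lt h))
    rw [Nat.succ_eq_add_one, Tkn_rec hq0 hq1, ih (by omega), ih (by omega)]
    simp

/-- The normalisation `(-1)^n T(k,n) q^{nk} / q^{n(n+1)/2}`. -/
def Ukn (q : ℝ) (k n : ℕ) : ℝ := (-1) ^ n * Tkn q k n * q ^ (n * k) / q ^ (n * (n + 1) / 2)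

/-- The recurrence for `U` on and above the diagonal, `k = n + m`. -/
lemma Ukn_rec {q : ℝ} (hq0 : 0 < q) (hq1 : q < 1) (n m : ℕ) :
    Ukn q (n + m + 1) (n + 1) = (1 + q ^ (2 * (n + 1))) / 2 * Ukn q (n + m) (n + 1)
      + q ^ m / 2 * Ukn q (n + m) n := by
  have ht : (n + 1) * (n + 1 + 1) / 2 = n * (n + 1) / 2 + (n + 1) := by
    rw [← tri_succ, Nat.add_sub_cancel, mul_comm n]
  rw [Ukn, Ukn, Ukn, Tkn_rec hq0 hq1, ht, pow_add q _ (n + 1)]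
  have hq := hq0.ne'
  generalize q ^ (n * (n + 1) / 2) = t
  simp only [inv_pow]
  rcases eq_or_ne t 0 with rfl | h
  · simp
  field_simp
  ring

/-- Double induction, on the distance `m` from the diagonal and then on `n`; the bound is stable
because `1/(q;q)_{m+1} = 1/(q;q)_m + q^{m+1}/(q;q)_{m+1}`. -/
lemma Ukn_bound {q : ℝ} (hq0 : 0 < q) (hq1 : q < 1) (m n : ℕ) :
    0 ≤ Ukn q (n + m) n ∧ Ukn q (n + m) n ≤ 1 / qPoch q q m := by
  have hP : ∀ m, qPoch q q m ≤ 1 := by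
    intro m
    induction m with
    | zero => simp [qPoch]
    | succ m ih =>
      rw [qPoch_succ]
      exact mul_le_one₀ ih (one_sub_pow_pos hq0 hq1 m).le (by linarith [pow_pos hq0 (m + 1)])
  induction m generalizing n with
  | zero =>
    induction n with
    | zero => simp [Ukn, Tkn_n_zero, qPoch]
    | succ n ih =>
      have h := Ukn_rec hq0 hq1 n 0
      have h0 : Ukn q (n + 0) (n + 1) = 0 := by
        simp [Ukn, Tkn_eq_zero hq0 hq1 (Nat.lt_succ_self n)]
      rw [h0, show n + 0 + 1 = n + 1 + 0 by ring] at h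
      rw [h]
      constructor <;> simp only [pow_zero] <;> linarith [ih.1, ih.2]
  | succ m ihm =>
    induction n with
    | zero =>
      simp only [Ukn, Tkn_n_zero]
      simpa using one_le_one_div (qPoch_pos hq0 hq1 (m + 1)) (hP (m + 1))
    | succ n ihn =>
      have h := Ukn_rec hq0 hq1 n (m + 1)
      have hm := ihm (n + 1)
      rw [show n + (m + 1) + 1 = n + 1 + (m + 1) by ring] at h
      rw [show n + 1 + m = n + (m + 1) by ring] at hm
      have hy1 : q ^ (2 * (n + 1)) ≤ 1 := pow_le_one₀ hq0.le hq1.le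
      have hy0 : 0 < q ^ (2 * (n + 1)) := pow_pos hq0 _
      have hz : 0 < q ^ (m + 1) := pow_pos hq0 _
      have hpas : 1 / qPoch q q (m + 1) =
          1 / qPoch q q m + q ^ (m + 1) * (1 / qPoch q q (m + 1)) := by
        rw [qPoch_succ]
        have h1 := (qPoch_pos hq0 hq1 m).ne'
        have h3 := (one_sub_pow_pos hq0 hq1 m).ne'
        field_simp
        ring
      rw [h]
      refine ⟨add_nonneg (mul_nonneg (by linarith) hm.1) (mul_nonneg (by linarith) ihn.1), ?_⟩
      rw [hpas]
      have ha : (1 + q ^ (2 * (n + 1))) / 2 * Ukn q (n + (m + 1)) (n + 1) ≤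
          1 * Ukn q (n + (m + 1)) (n + 1) := mul_le_mul_of_nonneg_right (by linarith) hm.1
      have hb : q ^ (m + 1) / 2 * Ukn q (n + (m + 1)) n ≤
          q ^ (m + 1) * (1 / qPoch q q (m + 1)) :=
        mul_le_mul (by linarith) ihn.2 ihn.1 hz.le
      linarith [hm.2]

lemma multipliable_qPoch {q : ℝ} (hq0 : 0 < q) (hq1 : q < 1) (a : ℝ) :
    Multipliable fun k : ℕ => 1 - a * q ^ k := by
  simp only [sub_eq_add_neg]
  exact Real.multipliable_one_add_of_summable
    ((summable_geometric_of_lt_one hq0.le hq1).mul_left a).neg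

lemma tendsto_qPoch {q : ℝ} (hq0 : 0 < q) (hq1 : q < 1) (a : ℝ) :
    Tendsto (qPoch q a) atTop (nhds (qPochInf q a)) :=
  (multipliable_qPoch hq0 hq1 a).hasProd.tendsto_prod_nat

lemma qPochInf_pos {q : ℝ} (hq0 : 0 < q) (hq1 : q < 1) : 0 < qPochInf q q := by
  have hs : Summable fun k : ℕ => Real.log (1 + -(q * q ^ k)) :=
    Real.summable_log_one_add_of_summable
      ((summable_geometric_of_lt_one hq0.le hq1).mul_left q).neg
  simp only [← sub_eq_add_neg] at hs
  rw [qPochInf, ← Real.rexp_tsum_eq_tprod (fun k => ?_) hs]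
  · exact Real.exp_pos _
  · rw [← pow_succ']; exact one_sub_pow_pos hq0 hq1 k

lemma qPochInf_le {q : ℝ} (hq0 : 0 < q) (hq1 : q < 1) (m : ℕ) : qPochInf q q ≤ qPoch q q m := by
  refine (antitone_nat_of_succ_le fun n => ?_).le_of_tendsto (tendsto_qPoch hq0 hq1 q) m
  rw [qPoch_succ]
  exact mul_le_of_le_one_right (qPoch_pos hq0 hq1 n).le (by linarith [pow_pos hq0 (n + 1)])

lemma one_le_qPochInf_neg {q : ℝ} (hq0 : 0 < q) (hq1 : q < 1) : 1 ≤ qPochInf q (-q) := by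
  refine ge_of_tendsto' (tendsto_qPoch hq0 hq1 (-q)) fun n => ?_
  induction n with
  | zero => simp [qPoch]
  | succ n ih =>
    rw [qPoch, Finset.prod_range_succ, ← qPoch]
    refine one_le_mul_of_one_le_of_one_le ih ?_
    linarith [mul_pos hq0 (pow_pos hq0 n)]

theorem stmt2 (q : ℝ) (hq0 : 0 < q) (hq1 : q < 1) :
    0 < 2 * qPochInf q (-q) / qPochInf q q ∧
    (∀ k n : ℕ, 1 ≤ k → 1 ≤ n →
      (-1 : ℝ) ^ n * Tkn q k n ≤
        (2 * qPochInf q (-q) / qPochInf q q) * q ^ (n * (n + 1) / 2) / q ^ (n * k)) := by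
  have hI := qPochInf_pos hq0 hq1
  have hN := one_le_qPochInf_neg hq0 hq1
  have hK : 0 < 2 * qPochInf q (-q) / qPochInf q q := by positivity
  refine ⟨hK, fun k n _ _ => ?_⟩
  rcases lt_or_ge k n with h | h
  · rw [Tkn_eq_zero hq0 hq1 h, mul_zero]
    positivity
  · obtain ⟨m, rfl⟩ := Nat.exists_eq_add_of_le h
    have hU : Ukn q (n + m) n ≤ 2 * qPochInf q (-q) / qPochInf q q :=
      calc Ukn q (n + m) n ≤ 1 / qPoch q q m := (Ukn_bound hq0 hq1 m n).2
        _ ≤ 1 / qPochInf q q := one_div_le_one_div_of_le hI (qPochInf_le hq0 hq1 m)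
        _ ≤ _ := by gcongr; linarith
    rw [le_div_iff₀ (by positivity)]
    rwa [Ukn, div_le_iff₀ (by positivity)] at hU
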